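/- There exists C = C(m,j,n) such that if u is a C^m function on the Euclidean ball B_r ⊂ ℝ^n and j ≤ m, then setting a = (m−j)/(m+n), one has r^j ‖∇^j u‖_{L^∞(B_r)} ≤ C( r^{-n} ‖u‖_{L¹(B_r)} + r^j ‖u‖_{L¹(B_r)}^a ‖∇^m u‖_{L^∞(B_r)}^{1−a} ). -/

import Mathlib

open MeasureTheory Metric

/-!
Let `S k` be the supremum of `‖∇^k u‖` over the ball and `A` the `L¹` norm of `u`. Every point `x`
of a ball of radius `r ≥ ε` is within `ε` of all points of some ball of radius `ε / 2` inside the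
large one. Averaging `u` over this small ball gives `S 0 ≤ K ε⁻ⁿ A + ε S 1`, and the mean value
inequality on it gives Landau's inequality `S (k + 1) ≤ 8 ε⁻¹ S k + ε S (k + 2)`. All `S k` are
finite because `S m` is, so the intermediate suprema can be absorbed from the bottom up, which
leaves `ρ ^ j * S j ≤ C * (ρ⁻ⁿ A + ρ ^ m * S m)` for every `ρ ≤ r`. Optimizing over `ρ` gives the
theorem.
-/

/-- Nonnegative sequences in which each of the terms with index `1, …, m` is interpolated between
its two neighbours, with an arbitrarily small factor `η` on the upper one. The function `h i`
records how the factor on the lower one depends on `η`. -/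
structure IsInterpolationChain (h : ℕ → ℝ → ℝ) (m : ℕ) (b : ℕ → ℝ) : Prop where
  nonneg : ∀ i, 0 ≤ b i
  succ_le : ∀ i < m, ∀ η ∈ Set.Ioc (0 : ℝ) 1, b (i + 1) ≤ h i η * b i + η * b (i + 2)

namespace IsInterpolationChain

variable {h : ℕ → ℝ → ℝ} {j m : ℕ}

lemma exists_succ_le_mul_zero_add_mul (hh : ∀ i η, 0 < η → 0 ≤ h i η) (hj : j < m) {δ : ℝ}
    (hδ : δ ∈ Set.Ioc (0 : ℝ) 1) :
    ∃ C, ∀ b, IsInterpolationChain h m b → b (j + 1) ≤ C * b 0 + δ * b (j + 2) := by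
  induction j generalizing δ with
  | zero => exact ⟨h 0 δ, fun b hb ↦ hb.succ_le 0 hj δ hδ⟩
  | succ j ih =>
    set H := h (j + 1) (δ / 2)
    have hH : 0 ≤ H := hh _ _ (half_pos hδ.1)
    -- This `θ` makes `H * θ ≤ 1 / 2`, so that the term `b (j + 2)` can be absorbed.
    set θ := 1 / (2 * (H + 1))
    have hθ : θ ∈ Set.Ioc (0 : ℝ) 1 :=
      ⟨by positivity, (div_le_one (by positivity)).2 (by linarith)⟩
    have hHθ : H * θ ≤ 1 / 2 := by
      rw [mul_one_div, div_le_div_iff₀ (by positivity) two_pos]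
      linarith
    obtain ⟨C, hC⟩ := ih (by omega) hθ
    refine ⟨2 * (H * C), fun b hb ↦ ?_⟩
    have hstep : b (j + 2) ≤ H * b (j + 1) + δ / 2 * b (j + 3) :=
      hb.succ_le (j + 1) hj _ ⟨half_pos hδ.1, by linarith [hδ.2]⟩
    have hlower : H * b (j + 1) ≤ H * (C * b 0 + θ * b (j + 2)) := by
      gcongr
      exact hC b hb
    have habsorb : H * θ * b (j + 2) ≤ 1 / 2 * b (j + 2) := by
      gcongr
      exact hb.nonneg _
    linarith

lemma exists_succ_le_mul_zero_add (hh : ∀ i η, 0 < η → 0 ≤ h i η) (hj : j ≤ m) :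
    ∃ C, ∀ b, IsInterpolationChain h m b → b (j + 1) ≤ C * b 0 + b (m + 1) := by
  induction hj using Nat.decreasingInduction with
  | self => exact ⟨0, fun b _ ↦ by simp⟩
  | of_succ j hj ih =>
    obtain ⟨C, hC⟩ := ih
    obtain ⟨C', hC'⟩ := exists_succ_le_mul_zero_add_mul hh hj (δ := 1) (by simp)
    exact ⟨C + C', fun b hb ↦ by linarith [hC b hb, hC' b hb]⟩

end IsInterpolationChain

section Optimization

variable {p q A M : ℝ}

lemma exists_pos_rpow_neg_mul_eq_and_rpow_mul_eq (hpq : 0 < p + q) (hA : 0 < A) (hM : 0 < M) :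
    ∃ t : ℝ, 0 < t ∧ t ^ (-p) * A = A ^ (q / (p + q)) * M ^ (1 - q / (p + q)) ∧
      t ^ q * M = A ^ (q / (p + q)) * M ^ (1 - q / (p + q)) := by
  refine ⟨(A / M) ^ (p + q)⁻¹, by positivity, ?_, ?_⟩
  · have hexp : (p + q)⁻¹ * -p = q / (p + q) - 1 := by
      field_simp
      ring
    rw [← Real.rpow_mul (by positivity), hexp, Real.div_rpow hA.le hM.le, Real.rpow_sub_one hA.ne',
      ← neg_sub 1 (q / (p + q)), Real.rpow_neg hM.le]
    field_simp
  · rw [← Real.rpow_mul (by positivity), inv_mul_eq_div, Real.div_rpow hA.le hM.le,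
      Real.rpow_sub hM, Real.rpow_one]
    field_simp

variable {r C D : ℝ}

lemma le_interpolation_of_forall_le_of_pos (hr : 0 < r) (hC : 0 ≤ C) (hq : 0 ≤ q)
    (hpq : 0 < p + q) (hA : 0 < A) (hM : 0 < M)
    (h : ∀ ρ ∈ Set.Ioc 0 r, D ≤ C * (ρ ^ (-p) * A + ρ ^ q * M)) :
    D ≤ 2 * C * (r ^ (-p) * A + A ^ (q / (p + q)) * M ^ (1 - q / (p + q))) := by
  obtain ⟨t, ht, htA, htM⟩ := exists_pos_rpow_neg_mul_eq_and_rpow_mul_eq hpq hA hM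
  have hneg : min r t ^ (-p) ≤ r ^ (-p) + t ^ (-p) := by
    rcases min_choice r t with hmin | hmin <;> rw [hmin]
    · exact le_add_of_nonneg_right (Real.rpow_nonneg ht.le _)
    · exact le_add_of_nonneg_left (Real.rpow_nonneg hr.le _)
  calc D ≤ C * (min r t ^ (-p) * A + min r t ^ q * M) :=
        h _ ⟨lt_min hr ht, min_le_left r t⟩
    _ ≤ C * ((r ^ (-p) + t ^ (-p)) * A + t ^ q * M) := by
        gcongr
        exact min_le_right r t
    _ = C * (r ^ (-p) * A + 2 * (A ^ (q / (p + q)) * M ^ (1 - q / (p + q)))) := by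
        rw [add_mul, htA, htM]
        ring
    _ ≤ C * (2 * (r ^ (-p) * A) + 2 * (A ^ (q / (p + q)) * M ^ (1 - q / (p + q)))) := by
        have : 0 ≤ r ^ (-p) * A := by positivity
        exact mul_le_mul_of_nonneg_left (by linarith) hC
    _ = _ := by ring

lemma le_interpolation_of_forall_le (hr : 0 < r) (hC : 0 ≤ C) (hp : 0 ≤ p) (hq : 0 ≤ q)
    (hpq : 0 < p + q) (hA : 0 ≤ A) (hM : 0 ≤ M)
    (h : ∀ ρ ∈ Set.Ioc 0 r, D ≤ C * (ρ ^ (-p) * A + ρ ^ q * M)) :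
    D ≤ 2 * C * (r ^ (-p) * A + A ^ (q / (p + q)) * M ^ (1 - q / (p + q))) := by
  set a := q / (p + q)
  have ha : 0 ≤ a := by positivity
  have ha' : 0 ≤ 1 - a := sub_nonneg.2 ((div_le_one hpq).2 (by linarith))
  have hlim : Filter.Tendsto
      (fun ε ↦ 2 * C * (r ^ (-p) * (A + ε) + (A + ε) ^ a * (M + ε) ^ (1 - a)))
      (nhdsWithin 0 (Set.Ioi 0)) (nhds (2 * C * (r ^ (-p) * A + A ^ a * M ^ (1 - a)))) := by
    have hcont : Continuous
        (fun ε ↦ 2 * C * (r ^ (-p) * (A + ε) + (A + ε) ^ a * (M + ε) ^ (1 - a))) := by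
      fun_prop (disch := simp [ha, ha'])
    simpa using (hcont.tendsto 0).mono_left nhdsWithin_le_nhds
  refine ge_of_tendsto hlim (eventually_mem_nhdsWithin.mono fun ε (hε : 0 < ε) ↦ ?_)
  refine le_interpolation_of_forall_le_of_pos hr hC hq hpq (by positivity) (by positivity)
    fun ρ hρ ↦ (h ρ hρ).trans ?_
  have := hρ.1
  gcongr <;> linarith

lemma pow_mul_le_interpolation_of_forall_le {j m n : ℕ} (hjm : j < m) (hr : 0 < r) (hC : 0 ≤ C)
    (hA : 0 ≤ A) (hM : 0 ≤ M)
    (h : ∀ ρ ∈ Set.Ioc 0 r, ρ ^ j * D ≤ C * ((ρ ^ n)⁻¹ * A + ρ ^ m * M)) :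
    r ^ j * D ≤ 2 * C * ((r ^ n)⁻¹ * A + r ^ j * A ^ (((m : ℝ) - j) / ((m : ℝ) + n)) *
      M ^ (1 - ((m : ℝ) - j) / ((m : ℝ) + n))) := by
  have hjm' : (j : ℝ) < m := mod_cast hjm
  have hneg {ρ : ℝ} (hρ : 0 < ρ) : ρ ^ (-((n : ℝ) + j)) = (ρ ^ n)⁻¹ * (ρ ^ j)⁻¹ := by
    rw [Real.rpow_neg hρ.le, Real.rpow_add hρ, Real.rpow_natCast, Real.rpow_natCast, mul_inv]
  have hsub {ρ : ℝ} (hρ : 0 < ρ) : ρ ^ ((m : ℝ) - j) = ρ ^ m / ρ ^ j := by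
    rw [Real.rpow_sub hρ, Real.rpow_natCast, Real.rpow_natCast]
  have hsum : (n : ℝ) + j + (m - j) = m + n := by ring
  have hD : D ≤ 2 * C * (r ^ (-((n : ℝ) + j)) * A +
      A ^ (((m : ℝ) - j) / (m + n)) * M ^ (1 - ((m : ℝ) - j) / (m + n))) := by
    rw [← hsum]
    refine le_interpolation_of_forall_le hr hC (by positivity) (by linarith)
      (by rw [hsum]; linarith [n.cast_nonneg (α := ℝ), j.cast_nonneg (α := ℝ)]) hA hM
      fun ρ ⟨hρ, hρr⟩ ↦ ?_
    rw [hneg hρ, hsub hρ]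
    refine le_of_mul_le_mul_left ((h ρ ⟨hρ, hρr⟩).trans_eq ?_) (pow_pos hρ j)
    field_simp
  rw [hneg hr] at hD
  refine (mul_le_mul_of_nonneg_left hD (pow_nonneg hr.le j)).trans_eq ?_
  field_simp

end Optimization

section Calculus

variable {E F : Type*} [NormedAddCommGroup E] [NormedSpace ℝ E] [NormedAddCommGroup F]
  [NormedSpace ℝ F]

lemma exists_ball_half_subset_ball_inter_ball {c x : E} {r ε : ℝ} (hε : 0 < ε) (hεr : ε ≤ r)
    (hx : x ∈ ball c r) : ∃ y, ball y (ε / 2) ⊆ ball c r ∩ ball x ε := by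
  have hr : 0 < r := hε.trans_le hεr
  set t := ε / (2 * r)
  have ht : 0 ≤ t := by positivity
  have ht' : 0 ≤ 1 - t := sub_nonneg.2 ((div_le_one (by positivity)).2 (by linarith))
  have htr : t * r = ε / 2 := by
    simp only [t]
    field_simp
  have hxc : dist x c ≤ r := (mem_ball.1 hx).le
  refine ⟨AffineMap.lineMap x c t, Set.subset_inter (ball_subset_ball' ?_) (ball_subset_ball' ?_)⟩
  · rw [dist_lineMap_right, Real.norm_of_nonneg ht']
    linarith [mul_le_mul_of_nonneg_left hxc ht']
  · rw [dist_lineMap_left, Real.norm_of_nonneg ht]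
    linarith [mul_le_mul_of_nonneg_left hxc ht]

lemma opNorm_le_of_dist_hasFDerivWithinAt_le {f : E → F} {f' : E → E →L[ℝ] F}
    {T : E →L[ℝ] F} {y : E} {δ P K : ℝ} (hδ : 0 < δ)
    (hf : ∀ z ∈ ball y δ, HasFDerivWithinAt f (f' z) (ball y δ) z)
    (hP : ∀ z ∈ ball y δ, ‖f z‖ ≤ P) (hK : ∀ z ∈ ball y δ, dist (f' z) T ≤ K) :
    ‖T‖ ≤ 4 / δ * P + K := by
  have hy : y ∈ ball y δ := mem_ball_self hδ
  have hP₀ : 0 ≤ P := (norm_nonneg _).trans (hP y hy)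
  have hK₀ : 0 ≤ K := dist_nonneg.trans (hK y hy)
  refine T.opNorm_le_of_unit_norm (by positivity) fun v hv ↦ ?_
  set w := (δ / 2) • v
  have hw : ‖w‖ = δ / 2 := by rw [norm_smul, hv, mul_one, Real.norm_of_nonneg (by positivity)]
  have hyw : y + w ∈ ball y δ := by
    rw [mem_ball, dist_self_add_left, hw]
    linarith
  have hmvt : ‖f (y + w) - f y - T w‖ ≤ K * ‖w‖ := by
    simpa only [add_sub_cancel_left] using
      (convex_ball y δ).norm_image_sub_le_of_norm_hasFDerivWithin_le' hf
        (fun z hz ↦ (dist_eq_norm _ T).symm.trans_le (hK z hz)) hy hyw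
  have hTw : ‖T w‖ ≤ 2 * P + K * ‖w‖ := by
    linarith [norm_le_insert (f (y + w) - f y) (T w), norm_sub_le (f (y + w)) (f y),
      hP _ hyw, hP y hy]
  have hTv : ‖T w‖ = δ / 2 * ‖T v‖ := by
    rw [map_smul, norm_smul, Real.norm_of_nonneg (by positivity)]
  rw [hTv, hw] at hTw
  refine le_of_mul_le_mul_left (hTw.trans_eq ?_) (half_pos hδ)
  field_simp
  ring

variable {u : E → F} {s : Set E} {m k : ℕ} {Q : ℝ}

lemma dist_fderivWithin_iteratedFDerivWithin {x z : E} :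
    dist (fderivWithin ℝ (iteratedFDerivWithin ℝ k u s) s z)
        (fderivWithin ℝ (iteratedFDerivWithin ℝ k u s) s x) =
      dist (iteratedFDerivWithin ℝ (k + 1) u s z) (iteratedFDerivWithin ℝ (k + 1) u s x) := by
  rw [fderivWithin_iteratedFDerivWithin]
  exact LinearIsometryEquiv.dist_map _ _ _

lemma dist_iteratedFDerivWithin_le (hs : Convex ℝ s) (hs' : UniqueDiffOn ℝ s)
    (hu : ContDiffOn ℝ m u s) (hk : k < m)
    (hQ : ∀ z ∈ s, ‖iteratedFDerivWithin ℝ (k + 1) u s z‖ ≤ Q) {x z : E} (hx : x ∈ s)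
    (hz : z ∈ s) :
    dist (iteratedFDerivWithin ℝ k u s z) (iteratedFDerivWithin ℝ k u s x) ≤ Q * dist z x := by
  rw [dist_eq_norm, dist_eq_norm]
  exact hs.norm_image_sub_le_of_norm_fderivWithin_le
    (hu.differentiableOn_iteratedFDerivWithin (mod_cast hk) hs')
    (fun y hy ↦ norm_fderivWithin_iteratedFDerivWithin.trans_le (hQ y hy)) hx hz

lemma exists_norm_iteratedFDerivWithin_le (hs : Convex ℝ s) (hs' : UniqueDiffOn ℝ s)
    (hsb : Bornology.IsBounded s) (hu : ContDiffOn ℝ m u s)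
    (hm : ∃ M, ∀ x ∈ s, ‖iteratedFDerivWithin ℝ m u s x‖ ≤ M) (hk : k ≤ m) :
    ∃ P, ∀ x ∈ s, ‖iteratedFDerivWithin ℝ k u s x‖ ≤ P := by
  obtain rfl | ⟨x₀, hx₀⟩ := s.eq_empty_or_nonempty
  · simp
  induction hk using Nat.decreasingInduction with
  | self => exact hm
  | of_succ k hk ih =>
    obtain ⟨Q, hQ⟩ := ih
    obtain ⟨R, hR⟩ := isBounded_iff.1 hsb
    have hQ₀ : 0 ≤ Q := (norm_nonneg _).trans (hQ x₀ hx₀)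
    refine ⟨‖iteratedFDerivWithin ℝ k u s x₀‖ + Q * R, fun x hx ↦ ?_⟩
    calc ‖iteratedFDerivWithin ℝ k u s x‖
        ≤ ‖iteratedFDerivWithin ℝ k u s x₀‖
          + dist (iteratedFDerivWithin ℝ k u s x) (iteratedFDerivWithin ℝ k u s x₀) := by
          rw [dist_eq_norm]
          exact norm_le_norm_add_norm_sub' _ _
      _ ≤ ‖iteratedFDerivWithin ℝ k u s x₀‖ + Q * dist x x₀ := by
          gcongr
          exact dist_iteratedFDerivWithin_le hs hs' hu hk hQ hx₀ hx
      _ ≤ ‖iteratedFDerivWithin ℝ k u s x₀‖ + Q * R := by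
          gcongr
          exact hR hx hx₀

lemma norm_iteratedFDerivWithin_succ_le (hs : Convex ℝ s) (hs' : UniqueDiffOn ℝ s)
    (hu : ContDiffOn ℝ m u s) (hk : k + 1 < m) {P : ℝ}
    (hP : ∀ z ∈ s, ‖iteratedFDerivWithin ℝ k u s z‖ ≤ P)
    (hQ : ∀ z ∈ s, ‖iteratedFDerivWithin ℝ (k + 2) u s z‖ ≤ Q)
    {x y : E} {δ ε : ℝ} (hδ : 0 < δ) (hx : x ∈ s) (hy : ball y δ ⊆ s ∩ ball x ε) :
    ‖iteratedFDerivWithin ℝ (k + 1) u s x‖ ≤ 4 / δ * P + ε * Q := by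
  have hQ₀ : 0 ≤ Q := (norm_nonneg _).trans (hQ x hx)
  have hdiff : DifferentiableOn ℝ (iteratedFDerivWithin ℝ k u s) s :=
    hu.differentiableOn_iteratedFDerivWithin (mod_cast (by omega : k < m)) hs'
  rw [← norm_fderivWithin_iteratedFDerivWithin]
  refine opNorm_le_of_dist_hasFDerivWithinAt_le hδ
    (fun z hz ↦ (hdiff z (hy hz).1).hasFDerivWithinAt.mono fun w hw ↦ (hy hw).1)
    (fun z hz ↦ hP z (hy hz).1) fun z hz ↦ ?_
  rw [dist_fderivWithin_iteratedFDerivWithin]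
  calc dist (iteratedFDerivWithin ℝ (k + 1) u s z) (iteratedFDerivWithin ℝ (k + 1) u s x)
      ≤ Q * dist z x := dist_iteratedFDerivWithin_le hs hs' hu hk hQ hx (hy hz).1
    _ ≤ Q * ε := by
        gcongr
        exact (mem_ball.1 (hy hz).2).le
    _ = ε * Q := mul_comm Q ε

/-- The `L^∞` norm of the `k`-th derivative of `u` on `s`, as a real number: it is `0` by
convention if that derivative is unbounded. -/
noncomputable def supNormIteratedFDerivWithin (k : ℕ) (u : E → F) (s : Set E) : ℝ :=
  ⨆ x : s, ‖iteratedFDerivWithin ℝ k u s x‖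

lemma supNormIteratedFDerivWithin_nonneg : 0 ≤ supNormIteratedFDerivWithin k u s :=
  Real.iSup_nonneg fun _ ↦ norm_nonneg _

lemma norm_iteratedFDerivWithin_le_supNorm
    (h : ∃ P, ∀ x ∈ s, ‖iteratedFDerivWithin ℝ k u s x‖ ≤ P) {x : E} (hx : x ∈ s) :
    ‖iteratedFDerivWithin ℝ k u s x‖ ≤ supNormIteratedFDerivWithin k u s := by
  obtain ⟨P, hP⟩ := h
  exact le_ciSup (f := fun x : s ↦ ‖iteratedFDerivWithin ℝ k u s x‖)
    ⟨P, Set.forall_mem_range.2 fun x ↦ hP x x.2⟩ ⟨x, hx⟩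

lemma supNormIteratedFDerivWithin_le (hs : s.Nonempty) {P : ℝ}
    (hP : ∀ x ∈ s, ‖iteratedFDerivWithin ℝ k u s x‖ ≤ P) :
    supNormIteratedFDerivWithin k u s ≤ P :=
  have := hs.to_subtype
  ciSup_le fun x ↦ hP x x.2

lemma supNormIteratedFDerivWithin_ball_succ_le {c : E} {r ε : ℝ}
    (hu : ContDiffOn ℝ m u (ball c r)) (hk : k + 1 < m)
    (hm : ∃ M, ∀ x ∈ ball c r, ‖iteratedFDerivWithin ℝ m u (ball c r) x‖ ≤ M)
    (hε : 0 < ε) (hεr : ε ≤ r) :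
    supNormIteratedFDerivWithin (k + 1) u (ball c r) ≤
      8 / ε * supNormIteratedFDerivWithin k u (ball c r)
        + ε * supNormIteratedFDerivWithin (k + 2) u (ball c r) := by
  have hball : UniqueDiffOn ℝ (ball c r) := isOpen_ball.uniqueDiffOn
  have hle {i : ℕ} (hi : i ≤ m) (x) (hx : x ∈ ball c r) :=
    norm_iteratedFDerivWithin_le_supNorm
      (exists_norm_iteratedFDerivWithin_le (convex_ball c r) hball isBounded_ball hu hm hi) hx
  refine supNormIteratedFDerivWithin_le (nonempty_ball.2 (hε.trans_le hεr)) fun x hx ↦ ?_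
  obtain ⟨y, hy⟩ := exists_ball_half_subset_ball_inter_ball hε hεr hx
  convert norm_iteratedFDerivWithin_succ_le (convex_ball c r) hball hu hk (hle (by omega))
    (hle (by omega)) (half_pos hε) hx hy using 3
  field_simp
  norm_num

end Calculus

lemma norm_le_setAverage_norm_add {α F : Type*} [MeasurableSpace α] [SeminormedAddCommGroup F]
    {μ : Measure α} {f : α → F} {t : Set α} {x : α} {K : ℝ} (ht₀ : μ t ≠ 0) (ht : μ t ≠ ⊤)
    (hf : IntegrableOn (fun z ↦ ‖f z‖) t μ) (hK : ∀ z ∈ t, dist (f x) (f z) ≤ K) :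
    ‖f x‖ ≤ ⨍ z in t, ‖f z‖ ∂μ + K := by
  obtain ⟨z, hz, hle⟩ := exists_le_setAverage ht₀ ht hf
  linarith [norm_le_norm_add_norm_sub' (f x) (f z), dist_eq_norm (f x) (f z), hK z hz]

section Haar

open Module (finrank)

variable {E F : Type*} [NormedAddCommGroup E] [NormedSpace ℝ E] [MeasurableSpace E]
  (μ : Measure E) [NormedAddCommGroup F]

/-- The factors on the lower neighbours in the interpolation chain `rescaledNorms`: from averaging
at index `0`, from Landau's inequality afterwards. -/
noncomputable def interpolationFactor : ℕ → ℝ → ℝ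
  | 0, η => ((η / 2) ^ finrank ℝ E * μ.real (ball 0 1))⁻¹
  | _ + 1, η => 8 / η

lemma interpolationFactor_nonneg (i : ℕ) {η : ℝ} (hη : 0 < η) : 0 ≤ interpolationFactor μ i η := by
  cases i <;> simp only [interpolationFactor] <;> positivity

variable [FiniteDimensional ℝ E] [BorelSpace E] [μ.IsAddHaarMeasure] {u : E → F}

lemma setAverage_norm_le_of_ball_subset {s : Set E} {y : E} {δ : ℝ} (hδ : 0 < δ)
    (hys : ball y δ ⊆ s) (hu : IntegrableOn (fun z ↦ ‖u z‖) s μ) :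
    ⨍ z in ball y δ, ‖u z‖ ∂μ ≤
      (δ ^ finrank ℝ E * μ.real (ball 0 1))⁻¹ * ∫ z in s, ‖u z‖ ∂μ := by
  have hvol : μ.real (ball y δ) = δ ^ finrank ℝ E * μ.real (ball 0 1) := by
    rw [measureReal_def, μ.addHaar_ball_of_pos y hδ, ENNReal.toReal_mul,
      ENNReal.toReal_ofReal (by positivity), measureReal_def]
  rw [setAverage_eq, smul_eq_mul, hvol]
  gcongr
  exact ae_of_all _ fun z ↦ norm_nonneg _

variable [NormedSpace ℝ F] {c : E} {m : ℕ} {r : ℝ}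

lemma integrableOn_norm_ball (hu : ContDiffOn ℝ m u (ball c r))
    (hm : ∃ M, ∀ x ∈ ball c r, ‖iteratedFDerivWithin ℝ m u (ball c r) x‖ ≤ M) :
    IntegrableOn (fun z ↦ ‖u z‖) (ball c r) μ := by
  obtain ⟨P, hP⟩ := exists_norm_iteratedFDerivWithin_le (convex_ball c r)
    isOpen_ball.uniqueDiffOn isBounded_ball hu hm m.zero_le
  refine .of_bound measure_ball_lt_top
    (hu.continuousOn.norm.aestronglyMeasurable measurableSet_ball) P
    (ae_restrict_of_forall_mem measurableSet_ball fun z hz ↦ ?_)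
  simpa only [norm_norm, norm_iteratedFDerivWithin_zero] using hP z hz

lemma supNormIteratedFDerivWithin_ball_zero_le {ε : ℝ} (hu : ContDiffOn ℝ m u (ball c r))
    (hm₀ : 0 < m) (hm : ∃ M, ∀ x ∈ ball c r, ‖iteratedFDerivWithin ℝ m u (ball c r) x‖ ≤ M)
    (hε : 0 < ε) (hεr : ε ≤ r) :
    supNormIteratedFDerivWithin 0 u (ball c r) ≤
      ((ε / 2) ^ finrank ℝ E * μ.real (ball 0 1))⁻¹ * ∫ z in ball c r, ‖u z‖ ∂μ
        + ε * supNormIteratedFDerivWithin 1 u (ball c r) := by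
  refine supNormIteratedFDerivWithin_le (nonempty_ball.2 (hε.trans_le hεr)) fun x hx ↦ ?_
  rw [norm_iteratedFDerivWithin_zero]
  obtain ⟨y, hy⟩ := exists_ball_half_subset_ball_inter_ball hε hεr hx
  have hys : ball y (ε / 2) ⊆ ball c r := fun z hz ↦ (hy hz).1
  have hint := integrableOn_norm_ball μ hu hm
  have hball : UniqueDiffOn ℝ (ball c r) := isOpen_ball.uniqueDiffOn
  have hosc : ∀ z ∈ ball y (ε / 2),
      dist (u x) (u z) ≤ ε * supNormIteratedFDerivWithin 1 u (ball c r) := by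
    intro z hz
    have hlip := dist_iteratedFDerivWithin_le (convex_ball c r) hball hu hm₀
      (fun _ ↦ norm_iteratedFDerivWithin_le_supNorm
        (exists_norm_iteratedFDerivWithin_le (convex_ball c r) hball isBounded_ball hu hm hm₀))
      (hys hz) hx
    rw [iteratedFDerivWithin_zero_eq_comp, Function.comp_apply, Function.comp_apply,
      LinearIsometryEquiv.dist_map, mul_comm] at hlip
    refine hlip.trans ?_
    gcongr
    · exact supNormIteratedFDerivWithin_nonneg
    · exact (mem_ball'.1 (hy hz).2).le
  refine (norm_le_setAverage_norm_add (measure_ball_pos μ y (half_pos hε)).ne'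
    measure_ball_lt_top.ne (hint.mono_set hys) hosc).trans ?_
  gcongr
  exact setAverage_norm_le_of_ball_subset μ (half_pos hε) hys hint

/-- The norms of `u` and its derivatives on `s`, made dimensionless at the length scale `ρ`. The
`L¹` norm of `u` has index `0`, and the `L^∞` norm of the `k`-th derivative has index `k + 1`. -/
noncomputable def rescaledNorms (u : E → F) (s : Set E) (ρ : ℝ) : ℕ → ℝ
  | 0 => (ρ ^ finrank ℝ E)⁻¹ * ∫ z in s, ‖u z‖ ∂μ
  | k + 1 => ρ ^ k * supNormIteratedFDerivWithin k u s

lemma isInterpolationChain_rescaledNorms {ρ : ℝ} (hu : ContDiffOn ℝ m u (ball c r))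
    (hm : ∃ M, ∀ x ∈ ball c r, ‖iteratedFDerivWithin ℝ m u (ball c r) x‖ ≤ M)
    (hρ : 0 < ρ) (hρr : ρ ≤ r) :
    IsInterpolationChain (interpolationFactor μ) m (rescaledNorms μ u (ball c r) ρ) where
  nonneg
    | 0 => by simp only [rescaledNorms]; positivity
    | k + 1 => mul_nonneg (by positivity) supNormIteratedFDerivWithin_nonneg
  succ_le i hi η hη := by
    have hη₀ : 0 < η := hη.1
    have hηρ : 0 < η * ρ := mul_pos hη.1 hρ
    have hηρr : η * ρ ≤ r := (mul_le_of_le_one_left hρ.le hη.2).trans hρr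
    cases i with
    | zero =>
      simp only [rescaledNorms, interpolationFactor, pow_zero, one_mul, pow_one]
      refine (supNormIteratedFDerivWithin_ball_zero_le μ hu hi hm hηρ hηρr).trans_eq ?_
      rw [mul_div_right_comm, mul_pow]
      simp only [mul_inv]
      ring
    | succ k =>
      simp only [rescaledNorms, interpolationFactor]
      refine (mul_le_mul_of_nonneg_left (supNormIteratedFDerivWithin_ball_succ_le hu hi hm hηρ hηρr)
        (pow_nonneg hρ.le (k + 1))).trans_eq ?_
      field_simp
      ring

lemma exists_pow_mul_norm_iteratedFDerivWithin_le {j : ℕ} (hj : j ≤ m) :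
    ∃ C, 0 ≤ C ∧ ∀ (c : E) (r : ℝ) (u : E → F), ContDiffOn ℝ m u (ball c r) → ∀ M : ℝ,
      (∀ x ∈ ball c r, ‖iteratedFDerivWithin ℝ m u (ball c r) x‖ ≤ M) →
      ∀ x ∈ ball c r, ∀ ρ ∈ Set.Ioc 0 r, ρ ^ j * ‖iteratedFDerivWithin ℝ j u (ball c r) x‖ ≤
        C * ((ρ ^ finrank ℝ E)⁻¹ * (∫ z in ball c r, ‖u z‖ ∂μ) + ρ ^ m * M) := by
  obtain ⟨C, hC⟩ := IsInterpolationChain.exists_succ_le_mul_zero_add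
    (fun i _ ↦ interpolationFactor_nonneg μ i) hj
  refine ⟨max C 1, by positivity, fun c r u hu M hM x hx ρ ⟨hρ, hρr⟩ ↦ ?_⟩
  have hM₀ : 0 ≤ M := (norm_nonneg _).trans (hM x hx)
  calc ρ ^ j * ‖iteratedFDerivWithin ℝ j u (ball c r) x‖
      ≤ ρ ^ j * supNormIteratedFDerivWithin j u (ball c r) := by
        gcongr
        exact norm_iteratedFDerivWithin_le_supNorm (exists_norm_iteratedFDerivWithin_le
          (convex_ball c r) isOpen_ball.uniqueDiffOn isBounded_ball hu ⟨M, hM⟩ hj) hx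
    _ ≤ C * ((ρ ^ finrank ℝ E)⁻¹ * ∫ z in ball c r, ‖u z‖ ∂μ)
          + ρ ^ m * supNormIteratedFDerivWithin m u (ball c r) :=
        hC _ (isInterpolationChain_rescaledNorms μ hu ⟨M, hM⟩ hρ hρr)
    _ ≤ max C 1 * ((ρ ^ finrank ℝ E)⁻¹ * ∫ z in ball c r, ‖u z‖ ∂μ) + 1 * (ρ ^ m * M) := by
        rw [one_mul]
        gcongr
        · exact le_max_left C 1
        · exact supNormIteratedFDerivWithin_le ⟨x, hx⟩ hM
    _ ≤ max C 1 * ((ρ ^ finrank ℝ E)⁻¹ * (∫ z in ball c r, ‖u z‖ ∂μ) + ρ ^ m * M) := by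
        rw [mul_add]
        gcongr
        exact le_max_right C 1

theorem stmt_15_general (m j : ℕ) (hj : j ≤ m) :
    ∃ C : ℝ, ∀ (c : E) (r : ℝ), 0 < r → ∀ u : E → F, ContDiffOn ℝ m u (ball c r) → ∀ M : ℝ,
      (∀ x ∈ ball c r, ‖iteratedFDerivWithin ℝ m u (ball c r) x‖ ≤ M) →
      ∀ x ∈ ball c r, r ^ j * ‖iteratedFDerivWithin ℝ j u (ball c r) x‖ ≤
        C * ((r ^ finrank ℝ E)⁻¹ * (∫ z in ball c r, ‖u z‖ ∂μ) +
          r ^ j * (∫ z in ball c r, ‖u z‖ ∂μ) ^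
              (((m : ℝ) - j) / ((m : ℝ) + finrank ℝ E)) *
            M ^ (1 - ((m : ℝ) - j) / ((m : ℝ) + finrank ℝ E))) := by
  obtain rfl | hjm := hj.eq_or_lt
  · refine ⟨1, fun c r hr u _ M hM x hx ↦ ?_⟩
    simp only [sub_self, zero_div, Real.rpow_zero, mul_one, sub_zero, Real.rpow_one, one_mul]
    exact (mul_le_mul_of_nonneg_left (hM x hx) (pow_nonneg hr.le j)).trans
      (le_add_of_nonneg_left (by positivity))
  · obtain ⟨C, hC₀, hC⟩ := exists_pow_mul_norm_iteratedFDerivWithin_le (F := F) μ hj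
    exact ⟨2 * C, fun c r hr u hu M hM x hx ↦ pow_mul_le_interpolation_of_forall_le hjm hr hC₀
      (by positivity) ((norm_nonneg _).trans (hM x hx)) (hC c r u hu M hM x hx)⟩

end Haar

/-- Scale-invariant Gagliardo–Nirenberg interpolation: there is `C = C(m,j,n)` such that
for a `C^m` function `u` on `B_r ⊂ ℝ^n` and `j ≤ m`, with `a = (m-j)/(m+n)`,
`r^j ‖∇^j u‖_{L^∞(B_r)} ≤ C (r^{-n}‖u‖_{L¹(B_r)} + r^j ‖u‖_{L¹(B_r)}^a ‖∇^m u‖_{L^∞(B_r)}^{1-a})`. -/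
theorem stmt_15 (m j n : ℕ) (hj : j ≤ m) :
    ∃ C : ℝ, ∀ r : ℝ, 0 < r → ∀ u : EuclideanSpace ℝ (Fin n) → ℝ,
      ContDiffOn ℝ m u (ball 0 r) →
      ∀ M : ℝ,
      (∀ x ∈ ball (0 : EuclideanSpace ℝ (Fin n)) r,
        ‖iteratedFDerivWithin ℝ m u (ball 0 r) x‖ ≤ M) →
      ∀ x ∈ ball (0 : EuclideanSpace ℝ (Fin n)) r,
        r ^ j * ‖iteratedFDerivWithin ℝ j u (ball 0 r) x‖ ≤
          C * ((r ^ n)⁻¹ * (∫ z in ball (0 : EuclideanSpace ℝ (Fin n)) r, |u z|) +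
            r ^ j * (∫ z in ball (0 : EuclideanSpace ℝ (Fin n)) r, |u z|) ^
                (((m : ℝ) - j) / ((m : ℝ) + n)) *
              M ^ (1 - ((m : ℝ) - j) / ((m : ℝ) + n))) := by
  obtain ⟨C, hC⟩ := stmt_15_general (F := ℝ)
    (volume : Measure (EuclideanSpace ℝ (Fin n))) m j hj
  exact ⟨C, by simpa only [Real.norm_eq_abs, finrank_euclideanSpace_fin] using hC 0⟩
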